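/- Let (λ,(θ,θ')) and (ξ,(η,η')) be as in the orbit classification with (λ,(θ,θ')) = (ξ,(η,η')). Then the intersection of the H(F)-orbit O^{(λ,(θ,θ'))} and the U(F)-orbit S^{(ξ,(η,η'))} in Gr_M × Gr_N consists of exactly one point, namely (t^{-ξ}, D t^{(η,η')}). -/

import Mathlib

/- Common setup: `F = ℂ((t))` the field of formal Laurent series, `O = ℂ[[t]]` its ring of
integers (elements with no negative coefficients), `tpow k = t^k`.  `InGLO A` says that the
square matrix `A` lies in `GL(O)`, i.e. both `A` and an inverse of `A` have entries in `O`. -/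

noncomputable section

abbrev F : Type := LaurentSeries ℂ

/-- `t^k` for `k : ℤ`, where `t` is the uniformizer of `ℂ((t))`. -/
noncomputable def tpow (k : ℤ) : F := (HahnSeries.single (1 : ℤ) (1 : ℂ) : F) ^ k

/-- The ring of integers `O = ℂ[[t]] ⊆ ℂ((t))`. -/
def Oint : Set F := {f : F | ∀ m : ℤ, m < 0 → f.coeff m = 0}

/-- `A ∈ GL_n(O)`. -/
def InGLO {n : ℕ} (A : Matrix (Fin n) (Fin n) F) : Prop :=
  ∃ B : Matrix (Fin n) (Fin n) F,
    (∀ i j, A i j ∈ Oint) ∧ (∀ i j, B i j ∈ Oint) ∧ A * B = 1 ∧ B * A = 1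

/-- Block-diagonal embedding of an `M×M` matrix into the top-left corner of an `n×n`
matrix, with `1`'s on the rest of the diagonal. -/
noncomputable def embTop (M n : ℕ) (g : Matrix (Fin M) (Fin M) F) :
    Matrix (Fin n) (Fin n) F := fun i j =>
  if hi : (i : ℕ) < M then
    (if hj : (j : ℕ) < M then g ⟨i, hi⟩ ⟨j, hj⟩ else 0)
  else (if (i : ℕ) = (j : ℕ) then 1 else 0)

/-- `u ∈ U⁻_{M,N}(F)`, the unipotent radical of the negative parabolic of type
`(M+1,1,…,1)` in `GL_N`: identity diagonal, and (0-based) the only nonzero off-diagonal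
entries are in rows `i ≥ M+1` and columns `j < i`. -/
def InUminus (M : ℕ) {n : ℕ} (u : Matrix (Fin n) (Fin n) F) : Prop :=
  (∀ i, u i i = 1) ∧
  ∀ i j : Fin n, i ≠ j → ((i : ℕ) ≤ M ∨ (i : ℕ) ≤ (j : ℕ)) → u i j = 0

/-- The representative `L_{(λ,(θ,θ'))} ∈ GL_N(F)`, `N = M+1+K`: the upper-left
`(M+1)×(M+1)` block has diagonal `t^{λ_i+θ_i}` (`i ≤ M`) and last row
`(t^{θ_1},…,t^{θ_{M+1}})`, and the lower-right block is `diag(t^{θ'_1},…,t^{θ'_K})`. -/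
noncomputable def LmatN (M K : ℕ) (lam : Fin M → ℤ) (th : Fin (M + 1) → ℤ)
    (th' : Fin K → ℤ) : Matrix (Fin (M + 1 + K)) (Fin (M + 1 + K)) F := fun i j =>
  if hi : (i : ℕ) < M then
    (if (i : ℕ) = (j : ℕ) then tpow (lam ⟨i, hi⟩ + th ⟨i, by omega⟩) else 0)
  else if hi2 : (i : ℕ) = M then
    (if hj : (j : ℕ) < M + 1 then tpow (th ⟨j, hj⟩) else 0)
  else if (i : ℕ) = (j : ℕ) then
    tpow (th' ⟨(i : ℕ) - (M + 1), by have := i.isLt; omega⟩)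
  else 0

/-- Lower-triangular unipotent matrices. -/
def LowUnip {n : ℕ} (v : Matrix (Fin n) (Fin n) F) : Prop :=
  (∀ i, v i i = 1) ∧ ∀ i j : Fin n, (i : ℕ) < (j : ℕ) → v i j = 0

/-- Upper-triangular unipotent matrices. -/
def UpUnip {n : ℕ} (v : Matrix (Fin n) (Fin n) F) : Prop :=
  (∀ i, v i i = 1) ∧ ∀ i j : Fin n, (j : ℕ) < (i : ℕ) → v i j = 0

/-- The diagonal matrix `diag(t^{f 0}, …, t^{f (n-1)})`. -/
noncomputable def tdiag {n : ℕ} (f : Fin n → ℤ) : Matrix (Fin n) (Fin n) F :=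
  Matrix.diagonal fun i => tpow (f i)

/-- The matrix `D ∈ GL_N`: the identity matrix except that row `M+1` (1-based) is
`(1,1,…,1,0,…,0)` with `M+1` ones. -/
noncomputable def Dmat (M K : ℕ) : Matrix (Fin (M + 1 + K)) (Fin (M + 1 + K)) F :=
  fun i j =>
    if (i : ℕ) = M then (if (j : ℕ) ≤ M then 1 else 0)
    else if i = j then 1 else 0

/-- Concatenation of `η : ℤ^{M+1}` and `η' : ℤ^{K}` into a sequence of length `N=M+1+K`. -/
def fullSeq (M K : ℕ) (eta : Fin (M + 1) → ℤ) (eta' : Fin K → ℤ) :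
    Fin (M + 1 + K) → ℤ := fun i =>
  if h : (i : ℕ) < M + 1 then eta ⟨i, h⟩
  else eta' ⟨(i : ℕ) - (M + 1), by have := i.isLt; omega⟩

/-- The exponent sequence of `t^{-ξ} = diag(t^{-ξ_1},…,t^{-ξ_M},1,…,1)`. -/
def xiExt (M K : ℕ) (xi : Fin M → ℤ) : Fin (M + 1 + K) → ℤ := fun i =>
  if h : (i : ℕ) < M then -(xi ⟨i, h⟩) else 0

/-- The simple roots `α_1, …, α_{M+N-1}` (`N = M+1+K`, so `M+N-1 = 2M+K`) of `GL(M|N)`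
with respect to the mixed Borel, as elements of the weight lattice `ℤ^M × ℤ^N` with basis
`δ_1,…,δ_M` (first factor) and `ε_1,…,ε_N` (second factor):
`α_{2k-1} = -ε_k + δ_k`, `α_{2k} = -δ_k + ε_{k+1}` (`1 ≤ k ≤ M`), and
`α_{2M+j} = -ε_{M+j} + ε_{M+j+1}` (`1 ≤ j ≤ N-M-1`). -/
noncomputable def sroot (M K : ℕ) (i : Fin (2 * M + K)) :
    (Fin M → ℤ) × (Fin (M + 1 + K) → ℤ) :=
  if h : (i : ℕ) < 2 * M then
    if (i : ℕ) % 2 = 0 then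
      (Pi.single ⟨(i : ℕ) / 2, by omega⟩ 1, Pi.single ⟨(i : ℕ) / 2, by omega⟩ (-1))
    else
      (Pi.single ⟨(i : ℕ) / 2, by omega⟩ (-1), Pi.single ⟨(i : ℕ) / 2 + 1, by omega⟩ 1)
  else
    (0, Pi.single ⟨(i : ℕ) - 2 * M + M, by have := i.isLt; omega⟩ (-1)
        + Pi.single ⟨(i : ℕ) - 2 * M + M + 1, by have := i.isLt; omega⟩ 1)

/-- `O` as a subring. -/
def OR : Subring F where
  carrier := Oint
  mul_mem' := by
    intro a b ha hb m hm
    rw [HahnSeries.coeff_mul]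
    refine Finset.sum_eq_zero fun ij hij => ?_
    have h := (Finset.mem_antidiagonal.mp hij).2.2
    rcases lt_or_ge ij.1 0 with h1 | h1
    · rw [ha _ h1, zero_mul]
    · rw [hb _ (by omega), mul_zero]
  one_mem' := by
    intro m hm
    rw [HahnSeries.coeff_one, if_neg (by omega)]
  add_mem' := by
    intro a b ha hb m hm
    rw [HahnSeries.coeff_add, ha _ hm, hb _ hm, add_zero]
  zero_mem' := by
    intro m hm
    simp
  neg_mem' := by
    intro a ha m hm
    rw [HahnSeries.coeff_neg, ha _ hm, neg_zero]

theorem tt_ne : (HahnSeries.single (1 : ℤ) (1 : ℂ) : F) ≠ 0 := by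
  simp

theorem tpow_add (a b : ℤ) : tpow (a + b) = tpow a * tpow b := zpow_add₀ tt_ne a b

theorem tpow_zero : tpow 0 = 1 := zpow_zero _

theorem tpow_ne (a : ℤ) : tpow a ≠ 0 := zpow_ne_zero _ tt_ne

theorem tpow_mem {a : ℤ} (ha : 0 ≤ a) : tpow a ∈ OR := by
  lift a to ℕ using ha
  unfold tpow
  rw [zpow_natCast]
  refine pow_mem ?_ _
  intro m hm
  rw [HahnSeries.coeff_single_of_ne (by omega)]

theorem tpow_sum {ι : Type*} (s : Finset ι) (f : ι → ℤ) :
    tpow (∑ i ∈ s, f i) = ∏ i ∈ s, tpow (f i) := by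
  classical
  induction s using Finset.induction_on with
  | empty => simp [tpow_zero]
  | insert a s ha ih => rw [Finset.sum_insert ha, Finset.prod_insert ha, tpow_add, ih]

theorem tdiag_mul {n : ℕ} (f g : Fin n → ℤ) : tdiag f * tdiag g = tdiag (fun i => f i + g i) := by
  simp [tdiag, Matrix.diagonal_mul_diagonal, tpow_add]

theorem tdiag_neg_mul {n : ℕ} (f : Fin n → ℤ) : tdiag (fun i => - f i) * tdiag f = 1 := by
  rw [tdiag_mul]; simp [tdiag, tpow_zero]

theorem tdiag_mul_neg {n : ℕ} (f : Fin n → ℤ) : tdiag f * tdiag (fun i => - f i) = 1 := by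
  rw [tdiag_mul]; simp [tdiag, tpow_zero]

theorem det_mem {n : ℕ} (A : Matrix (Fin n) (Fin n) F) (h : ∀ i j, A i j ∈ OR) :
    A.det ∈ OR := by
  rw [Matrix.det_apply']
  refine sum_mem fun s _ => mul_mem ?_ (prod_mem fun i _ => h _ _)
  exact intCast_mem _ _

theorem mul_mem_OR {k m n : ℕ} {A : Matrix (Fin k) (Fin m) F} {B : Matrix (Fin m) (Fin n) F}
    (hA : ∀ i j, A i j ∈ OR) (hB : ∀ i j, B i j ∈ OR) (i j) : (A * B) i j ∈ OR := by
  rw [Matrix.mul_apply]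
  exact sum_mem fun p _ => mul_mem (hA _ _) (hB _ _)

theorem inGLO_of_det {n : ℕ} (A : Matrix (Fin n) (Fin n) F) (h : ∀ i j, A i j ∈ OR)
    (hd : A.det = 1) : InGLO A := by
  refine ⟨A.adjugate, h, ?_, ?_, ?_⟩
  · intro i j
    rw [Matrix.adjugate_apply]
    refine det_mem _ fun a b => ?_
    rw [Matrix.updateRow_apply]
    split_ifs
    · rw [Pi.single_apply]
      split_ifs
      · exact one_mem OR
      · exact zero_mem OR
    · exact h _ _
  · rw [Matrix.mul_adjugate, hd, one_smul]
  · rw [Matrix.adjugate_mul, hd, one_smul]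

theorem InGLO.mul {n : ℕ} {A B : Matrix (Fin n) (Fin n) F} (hA : InGLO A) (hB : InGLO B) :
    InGLO (A * B) := by
  obtain ⟨A', h1, h2, h3, h4⟩ := hA
  obtain ⟨B', k1, k2, k3, k4⟩ := hB
  refine ⟨B' * A', mul_mem_OR h1 k1, mul_mem_OR k2 h2, ?_, ?_⟩
  · calc A * B * (B' * A') = A * (B * B') * A' := by simp only [Matrix.mul_assoc]
      _ = 1 := by rw [k3, Matrix.mul_one, h3]
  · calc B' * A' * (A * B) = B' * (A' * A) * B := by simp only [Matrix.mul_assoc]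
      _ = 1 := by rw [h4, Matrix.mul_one, k4]

theorem sum_inj_ge {k m : ℕ} (hk : k ≤ m) (mu : Fin m → ℤ) (hmu : Monotone mu)
    (p : Fin k → Fin m) (hp : Function.Injective p) :
    ∑ i, mu (Fin.castLE hk i) ≤ ∑ i, mu (p i) := by
  classical
  have hc : (Finset.univ.image p).card = k := by
    rw [Finset.card_image_of_injective _ hp]; simp
  have h1 : ∑ i, mu (p i) = ∑ x ∈ Finset.univ.image p, mu x := by
    rw [Finset.sum_image (fun a _ b _ h => hp h)]
  have h2 : ∑ x ∈ Finset.univ.image p, mu x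
      = ∑ i, mu ((Finset.univ.image p).orderEmbOfFin hc i) := by
    conv_lhs => rw [← Finset.map_orderEmbOfFin_univ _ hc]
    rw [Finset.sum_map]
    rfl
  rw [h1, h2]
  refine Finset.sum_le_sum fun i _ => hmu ?_
  have hs : StrictMono fun i => ((Finset.univ.image p).orderEmbOfFin hc i : Fin m) :=
    ((Finset.univ.image p).orderEmbOfFin hc).strictMono
  have key : ∀ n : ℕ, ∀ h : n < k,
      n ≤ ((Finset.univ.image p).orderEmbOfFin hc ⟨n, h⟩ : Fin m).val := by
    intro n
    induction n with
    | zero => intro h; exact Nat.zero_le _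
    | succ n ih =>
      intro h
      have a := ih (by omega)
      have b : ((Finset.univ.image p).orderEmbOfFin hc ⟨n, by omega⟩ : Fin m)
        < (Finset.univ.image p).orderEmbOfFin hc ⟨n+1, h⟩ :=
        hs (show (⟨n, by omega⟩ : Fin k) < ⟨n+1, h⟩ from by simp)
      have b' := Fin.lt_def.mp b
      omega
  exact Fin.le_def.mpr (key i.1 i.2)

theorem det_prod {k m : ℕ} (hk : k ≤ m) (mu : Fin m → ℤ) (hmu : Monotone mu)
    (A : Matrix (Fin k) (Fin m) F) (B : Matrix (Fin m) (Fin k) F)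
    (hA : ∀ i j, A i j ∈ OR) (hB : ∀ i j, B i j ∈ OR) :
    ∃ x ∈ OR, (A * tdiag mu * B).det = tpow (∑ i, mu (Fin.castLE hk i)) * x := by
  have e1 : (A * tdiag mu * B).det = (Matrix.detRowAlternating
      (fun i => ∑ p, (tpow (mu p) * B p i) • (fun j => A j p)) : F) := by
    rw [← Matrix.det_transpose]
    show Matrix.det _ = Matrix.det _
    congr 1
    funext i j
    rw [Matrix.transpose_apply, Matrix.mul_apply, Finset.sum_apply]
    refine Finset.sum_congr rfl fun p _ => ?_
    simp [tdiag, Matrix.mul_diagonal]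
    ring
  have e2 : (Matrix.detRowAlternating
      (fun i => ∑ p, (tpow (mu p) * B p i) • (fun j => A j p)) : F)
      = ∑ p : Fin k → Fin m, (∏ i, (tpow (mu (p i)) * B (p i) i)) *
        Matrix.det (fun i j => A j (p i)) := by
    have := MultilinearMap.map_sum (Matrix.detRowAlternating (R := F) (n := Fin k)).toMultilinearMap
      (fun i (p : Fin m) => (tpow (mu p) * B p i) • (fun j => A j p))
    refine this.trans ?_
    refine Finset.sum_congr rfl fun p _ => ?_
    exact MultilinearMap.map_smul_univ
      (Matrix.detRowAlternating (R := F) (n := Fin k)).toMultilinearMap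
      (fun i => tpow (mu (p i)) * B (p i) i) (fun i j => A j (p i))
  have e3 : ∀ p : Fin k → Fin m, ∃ x ∈ OR, (∏ i, (tpow (mu (p i)) * B (p i) i)) *
        Matrix.det (fun i j => A j (p i)) = tpow (∑ i, mu (Fin.castLE hk i)) * x := by
    intro p
    by_cases hp : Function.Injective p
    · have h := sum_inj_ge hk mu hmu p hp
      refine ⟨tpow (∑ i, mu (p i) - ∑ i, mu (Fin.castLE hk i)) * ((∏ i, B (p i) i) *
        Matrix.det (fun i j => A j (p i))), mul_mem (tpow_mem (by omega))
          (mul_mem (prod_mem fun i _ => hB _ _) (det_mem _ fun i j => hA _ _)), ?_⟩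
      rw [← mul_assoc, ← tpow_add, add_sub_cancel, tpow_sum, Finset.prod_mul_distrib, mul_assoc]
    · refine ⟨0, zero_mem _, ?_⟩
      rw [Function.not_injective_iff] at hp
      obtain ⟨a, b, hab, hne⟩ := hp
      have hz : Matrix.det (fun i j => A j (p i)) = 0 :=
        Matrix.det_zero_of_row_eq hne (funext fun j => by
          show A j (p a) = A j (p b)
          rw [hab])
      erw [hz]
      rw [mul_zero, mul_zero]
  choose f hf1 hf2 using e3
  refine ⟨∑ p, f p, sum_mem fun p _ => hf1 p, ?_⟩
  rw [e1, e2, Finset.mul_sum]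
  exact Finset.sum_congr rfl fun p _ => hf2 p

theorem upper_integral {m n : ℕ} (hmn : m ≤ n) (mu : Fin m → ℤ) (hmu : Monotone mu)
    (l c : Matrix (Fin m) (Fin m) F) (r C : Matrix (Fin m) (Fin n) F)
    (hl : LowUnip l) (hr1 : ∀ i, r i (Fin.castLE hmn i) = 1)
    (hr0 : ∀ (i : Fin m) (j : Fin n), (j : ℕ) < (i : ℕ) → r i j = 0)
    (hc : ∀ i j, c i j ∈ OR) (hC : ∀ i j, C i j ∈ OR)
    (he : l * tdiag mu * r = c * tdiag mu * C) : ∀ i j, r i j ∈ OR := by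
  intro k j
  have hk : k.1 + 1 ≤ m := k.2
  let J : Fin (k.1 + 1) → Fin n := fun a => if a.1 = k.1 then j else ⟨a.1, by omega⟩
  let I : Fin (k.1 + 1) → Fin m := Fin.castLE hk
  have e1 : (l * tdiag mu * r).submatrix I J
      = l.submatrix I I * tdiag (fun a => mu (I a)) * r.submatrix I J := by
    refine Matrix.ext fun a b => ?_
    rw [Matrix.submatrix_apply, Matrix.mul_apply, Matrix.mul_apply]
    symm
    refine Fintype.sum_of_injective I (Fin.castLE_injective hk) _ _ ?_ ?_
    · intro p hp
      have : k.1 < p.1 := by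
        by_contra hcon
        exact hp ⟨⟨p.1, by omega⟩, rfl⟩
      have h0 : l (I a) p = 0 := hl.2 _ _ (by
        show a.1 < p.1
        omega)
      simp [tdiag, Matrix.mul_diagonal, h0]
    · intro p
      simp [tdiag, Matrix.mul_diagonal]
  have e2 : (c * tdiag mu * C).submatrix I J = c.submatrix I id * tdiag mu * C.submatrix id J := by
    refine Matrix.ext fun a b => ?_
    simp [tdiag, Matrix.mul_apply]
  obtain ⟨x, hx, hx2⟩ := det_prod hk mu hmu (c.submatrix I id) (C.submatrix id J)
    (fun _ _ => hc _ _) (fun _ _ => hC _ _)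
  rw [← e2, ← he, e1, Matrix.det_mul, Matrix.det_mul] at hx2
  have d1 : (l.submatrix I I).det = 1 := by
    rw [Matrix.det_of_isLowerTriangular]
    · exact Finset.prod_eq_one fun i _ => hl.1 _
    · intro a b hab
      exact hl.2 _ _ (Fin.lt_def.mp (OrderDual.toDual_lt_toDual.mp hab))
  have d2 : (tdiag (fun a => mu (I a))).det = tpow (∑ i, mu (Fin.castLE hk i)) := by
    rw [tdiag, Matrix.det_diagonal, tpow_sum]
  have d3 : (r.submatrix I J).det = r k j := by
    rw [Matrix.det_of_isUpperTriangular]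
    · rw [Finset.prod_eq_single (Fin.last k.1)]
      · simp [I, J]
        rfl
      · intro b _ hb
        have hb' : b.1 ≠ k.1 := fun h => hb (Fin.ext h)
        simp only [Matrix.submatrix_apply, J, if_neg hb']
        exact hr1 (I b)
      · simp
    · intro a b hab
      have hab' : b.1 < a.1 := hab
      have hb' : b.1 ≠ k.1 := by omega
      simp only [Matrix.submatrix_apply, J, if_neg hb']
      exact hr0 _ _ hab'
  rw [d1, d2, d3, one_mul] at hx2
  rw [mul_left_cancel₀ (tpow_ne _) hx2]
  exact hx

theorem LowUnip.det {n : ℕ} {v : Matrix (Fin n) (Fin n) F} (h : LowUnip v) : v.det = 1 := by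
  rw [Matrix.det_of_isLowerTriangular]
  · exact Finset.prod_eq_one fun i _ => h.1 _
  · intro a b hab
    exact h.2 _ _ (Fin.lt_def.mp (OrderDual.toDual_lt_toDual.mp hab))

theorem LowUnip.tr {n : ℕ} {v : Matrix (Fin n) (Fin n) F} (h : LowUnip v) :
    UpUnip v.transpose := ⟨fun i => h.1 i, fun i j hij => h.2 j i hij⟩

theorem UpUnip.tr {n : ℕ} {v : Matrix (Fin n) (Fin n) F} (h : UpUnip v) :
    LowUnip v.transpose := ⟨fun i => h.1 i, fun i j hij => h.2 j i hij⟩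

theorem UpUnip.det {n : ℕ} {v : Matrix (Fin n) (Fin n) F} (h : UpUnip v) : v.det = 1 := by
  rw [← Matrix.det_transpose]; exact h.tr.det

theorem LowUnip.inv {n : ℕ} {v : Matrix (Fin n) (Fin n) F} (h : LowUnip v) :
    ∃ w, LowUnip w ∧ v * w = 1 ∧ w * v = 1 := by
  have hu : IsUnit v.det := by rw [h.det]; exact isUnit_one
  have h1 := Matrix.mul_nonsing_inv v hu
  have h2 := Matrix.nonsing_inv_mul v hu
  have := Matrix.invertibleOfIsUnitDet v hu
  have hb : Matrix.BlockTriangular v (OrderDual.toDual : Fin n → (Fin n)ᵒᵈ) := by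
    intro a b hab
    exact h.2 _ _ (Fin.lt_def.mp (OrderDual.toDual_lt_toDual.mp hab))
  have hb' := Matrix.blockTriangular_inv_of_blockTriangular hb
  have h0 : ∀ i j : Fin n, (i : ℕ) < (j : ℕ) → v⁻¹ i j = 0 := fun i j hij =>
    hb' (OrderDual.toDual_lt_toDual.mpr (Fin.lt_def.mpr hij))
  refine ⟨v⁻¹, ⟨fun i => ?_, h0⟩, h1, h2⟩
  have e : (v⁻¹ * v) i i = 1 := by rw [h2, Matrix.one_apply_eq]
  rw [Matrix.mul_apply, Finset.sum_eq_single i] at e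
  · rwa [h.1, mul_one] at e
  · intro k _ hk
    rcases lt_or_gt_of_ne (fun hh => hk (Fin.ext hh) : (k : ℕ) ≠ (i : ℕ)) with hlt | hgt
    · rw [h.2 k i hlt, mul_zero]
    · rw [h0 i k hgt, zero_mul]
  · simp

theorem UpUnip.inv {n : ℕ} {v : Matrix (Fin n) (Fin n) F} (h : UpUnip v) :
    ∃ w, UpUnip w ∧ v * w = 1 ∧ w * v = 1 := by
  obtain ⟨w, h1, h2, h3⟩ := h.tr.inv
  refine ⟨w.transpose, h1.tr, ?_, ?_⟩
  · rw [← Matrix.transpose_transpose v, ← Matrix.transpose_mul, h3, Matrix.transpose_one]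
  · rw [← Matrix.transpose_transpose v, ← Matrix.transpose_mul, h2, Matrix.transpose_one]

theorem conj_apply {n : ℕ} (f : Fin n → ℤ) (v : Matrix (Fin n) (Fin n) F) (i j : Fin n) :
    (tdiag (fun i => - f i) * v * tdiag f) i j = tpow (- f i) * v i j * tpow (f j) := by
  simp [tdiag, Matrix.mul_diagonal, Matrix.diagonal_mul]

theorem conj_one {n : ℕ} (f : Fin n → ℤ) (v : Matrix (Fin n) (Fin n) F) (i : Fin n)
    (h : v i i = 1) : (tdiag (fun i => - f i) * v * tdiag f) i i = 1 := by
  rw [conj_apply, h, mul_one, ← tpow_add, neg_add_cancel, tpow_zero]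

theorem conj_zero {n : ℕ} (f : Fin n → ℤ) (v : Matrix (Fin n) (Fin n) F) (i j : Fin n)
    (h : v i j = 0) : (tdiag (fun i => - f i) * v * tdiag f) i j = 0 := by
  rw [conj_apply, h, mul_zero, zero_mul]

theorem tconj_mul {n : ℕ} (f : Fin n → ℤ) (v w : Matrix (Fin n) (Fin n) F) :
    (tdiag (fun i => - f i) * v * tdiag f) * (tdiag (fun i => - f i) * w * tdiag f)
      = tdiag (fun i => - f i) * (v * w) * tdiag f := by
  calc _ = tdiag (fun i => - f i) * v * (tdiag f * tdiag (fun i => - f i)) * w * tdiag f := by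
        simp only [Matrix.mul_assoc]
    _ = _ := by rw [tdiag_mul_neg, Matrix.mul_one]; simp only [Matrix.mul_assoc]

theorem conj_id {n : ℕ} (f : Fin n → ℤ) :
    tdiag (fun i => - f i) * (1 : Matrix (Fin n) (Fin n) F) * tdiag f = 1 := by
  rw [Matrix.mul_one, tdiag_neg_mul]

theorem LowUnip.conj {n : ℕ} {v : Matrix (Fin n) (Fin n) F} (h : LowUnip v) (f : Fin n → ℤ) :
    LowUnip (tdiag (fun i => - f i) * v * tdiag f) :=
  ⟨fun i => conj_one f v i (h.1 i), fun i j hij => conj_zero f v i j (h.2 i j hij)⟩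

theorem UpUnip.conj {n : ℕ} {v : Matrix (Fin n) (Fin n) F} (h : UpUnip v) (f : Fin n → ℤ) :
    UpUnip (tdiag (fun i => - f i) * v * tdiag f) :=
  ⟨fun i => conj_one f v i (h.1 i), fun i j hij => conj_zero f v i j (h.2 i j hij)⟩

theorem isolate {n : ℕ} (f : Fin n → F) (m : Fin n) (hs : ∑ l, f l ∈ OR)
    (h : ∀ l, l ≠ m → f l ∈ OR) : f m ∈ OR := by
  rw [← Finset.add_sum_erase Finset.univ f (Finset.mem_univ m)] at hs
  have h2 : ∑ l ∈ Finset.univ.erase m, f l ∈ OR :=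
    sum_mem fun l hl => h l (Finset.ne_of_mem_erase hl)
  have := sub_mem hs h2
  rwa [add_sub_cancel_right] at this

theorem ul_integral {n : ℕ} (a : ℕ) (R W E : Matrix (Fin n) (Fin n) F) (hR : UpUnip R)
    (hW1 : ∀ j : Fin n, a ≤ (j : ℕ) → W j j = 1)
    (hW0 : ∀ i j : Fin n, a ≤ (j : ℕ) → (i : ℕ) < (j : ℕ) → W i j = 0)
    (hE : ∀ i j, E i j ∈ OR) (h : R * W = E) :
    ∀ m : Fin n, a ≤ (m : ℕ) → (∀ i, R i m ∈ OR) ∧ (∀ k : Fin n, a ≤ (k : ℕ) → W m k ∈ OR) := by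
  intro m
  induction m using WellFoundedGT.induction with
  | ind m ih =>
    intro ham
    constructor
    · intro i
      have h1 : ∑ l, R i l * W l m ∈ OR := by
        rw [← Matrix.mul_apply, h]; exact hE _ _
      have h2 := isolate (fun l => R i l * W l m) m h1 (fun l hl => by
        rcases lt_or_gt_of_ne hl with hlt | hgt
        · show R i l * W l m ∈ OR
          rw [hW0 l m ham hlt, mul_zero]; exact zero_mem _
        · have hl' := ih l hgt (ham.trans (le_of_lt hgt))
          exact mul_mem (hl'.1 i) (hl'.2 m ham))
      simpa only [hW1 m ham, mul_one] using h2
    · intro k hak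
      have h1 : ∑ l, R m l * W l k ∈ OR := by
        rw [← Matrix.mul_apply, h]; exact hE _ _
      have h2 := isolate (fun l => R m l * W l k) m h1 (fun l hl => by
        rcases lt_or_gt_of_ne hl with hlt | hgt
        · show R m l * W l k ∈ OR
          rw [hR.2 m l hlt, zero_mul]; exact zero_mem _
        · have hl' := ih l hgt (ham.trans (le_of_lt hgt))
          exact mul_mem (hl'.1 m) (hl'.2 k hak))
      simpa only [hR.1 m, one_mul] using h2

theorem inv_rows {n : ℕ} (a : ℕ) (R r : Matrix (Fin n) (Fin n) F) (hR : UpUnip R)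
    (h : R * r = 1) (hc : ∀ m : Fin n, a ≤ (m : ℕ) → ∀ i, R i m ∈ OR) :
    ∀ i : Fin n, a ≤ (i : ℕ) → ∀ j, r i j ∈ OR := by
  intro i
  induction i using WellFoundedGT.induction with
  | ind i ih =>
    intro hai j
    have h1 : ∑ l, R i l * r l j ∈ OR := by
      rw [← Matrix.mul_apply, h, Matrix.one_apply]
      split_ifs
      · exact one_mem _
      · exact zero_mem _
    have h2 := isolate (fun l => R i l * r l j) i h1 (fun l hl => by
        rcases lt_or_gt_of_ne hl with hlt | hgt
        · show R i l * r l j ∈ OR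
          rw [hR.2 i l hlt, zero_mul]; exact zero_mem _
        · have hal : a ≤ (l : ℕ) := hai.trans (le_of_lt hgt)
          exact mul_mem (hc l hal i) (ih l hgt hal j))
    simpa only [hR.1 i, one_mul] using h2

theorem mul_left_one {n k : ℕ} (A : Matrix (Fin n) (Fin n) F) (B : Matrix (Fin n) (Fin k) F)
    (i : Fin n) (j : Fin k)
    (h : ∀ k, A i k = (1 : Matrix (Fin n) (Fin n) F) i k ∨ B k j = 0) :
    (A * B) i j = B i j := by
  have : (A * B) i j = ((1 : Matrix (Fin n) (Fin n) F) * B) i j := by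
    rw [Matrix.mul_apply, Matrix.mul_apply]
    refine Finset.sum_congr rfl fun k _ => ?_
    rcases h k with h | h <;> rw [h]
    rw [mul_zero, mul_zero]
  rw [this, Matrix.one_mul]

theorem mul_right_one {n k : ℕ} (A : Matrix (Fin k) (Fin n) F) (B : Matrix (Fin n) (Fin n) F)
    (i : Fin k) (j : Fin n)
    (h : ∀ k, B k j = (1 : Matrix (Fin n) (Fin n) F) k j ∨ A i k = 0) :
    (A * B) i j = A i j := by
  have : (A * B) i j = (A * (1 : Matrix (Fin n) (Fin n) F)) i j := by
    rw [Matrix.mul_apply, Matrix.mul_apply]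
    refine Finset.sum_congr rfl fun k _ => ?_
    rcases h k with h | h <;> rw [h]
    rw [zero_mul, zero_mul]
  rw [this, Matrix.mul_one]

theorem Dmat_row (M K : ℕ) (i k : Fin (M + 1 + K)) (hi : (i : ℕ) ≠ M) :
    Dmat M K i k = (1 : Matrix (Fin (M + 1 + K)) (Fin (M + 1 + K)) F) i k := by
  unfold Dmat
  rw [if_neg hi, Matrix.one_apply]

theorem Dmat_col (M K : ℕ) (k j : Fin (M + 1 + K)) (hj : M ≤ (j : ℕ)) :
    Dmat M K k j = (1 : Matrix (Fin (M + 1 + K)) (Fin (M + 1 + K)) F) k j := by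
  unfold Dmat
  rw [Matrix.one_apply]
  by_cases hk : (k : ℕ) = M
  · rw [if_pos hk]
    by_cases h : k = j
    · subst h
      rw [if_pos (by omega), if_pos rfl]
    · have : (k : ℕ) ≠ j := fun hh => h (Fin.ext hh)
      rw [if_neg (by omega), if_neg h]
  · rw [if_neg hk]

theorem embTop_col (M n : ℕ) (g : Matrix (Fin M) (Fin M) F) (i k : Fin n) (hk : M ≤ (k : ℕ)) :
    embTop M n g i k = (1 : Matrix (Fin n) (Fin n) F) i k := by
  unfold embTop
  rw [Matrix.one_apply]
  by_cases hi : (i : ℕ) < M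
  · rw [dif_pos hi, dif_neg (by omega), if_neg (fun h => by subst h; omega)]
  · rw [dif_neg hi]
    simp only [Fin.ext_iff]

theorem Uminus_row (M : ℕ) {n : ℕ} {u : Matrix (Fin n) (Fin n) F} (hu : InUminus M u)
    (k j : Fin n) (hk : (k : ℕ) ≤ M) : u k j = (1 : Matrix (Fin n) (Fin n) F) k j := by
  rw [Matrix.one_apply]
  split_ifs with h
  · subst h; exact hu.1 _
  · exact hu.2 k j h (Or.inl hk)

/-- rows `< M` of `g u D` -/
theorem top_rows (M K : ℕ) (g : Matrix (Fin M) (Fin M) F)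
    (u : Matrix (Fin (M + 1 + K)) (Fin (M + 1 + K)) F) (hu : InUminus M u)
    (i j : Fin (M + 1 + K)) (hi : (i : ℕ) < M) :
    (embTop M (M + 1 + K) g * u * Dmat M K) i j = embTop M (M + 1 + K) g i j := by
  have h0 : ∀ k : Fin (M + 1 + K), M ≤ (k : ℕ) → embTop M (M + 1 + K) g i k = 0 := by
    intro k hk
    rw [embTop_col _ _ _ _ _ hk, Matrix.one_apply_ne (fun h => by subst h; omega)]
  have h1 : ∀ j, (embTop M (M + 1 + K) g * u) i j = embTop M (M + 1 + K) g i j := by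
    intro j
    refine mul_right_one _ _ _ _ fun k => ?_
    rcases lt_or_ge (k : ℕ) M with hk | hk
    · exact Or.inl (Uminus_row M hu k j hk.le)
    · exact Or.inr (h0 k hk)
  rw [← h1]
  refine mul_right_one _ _ _ _ fun k => ?_
  rcases lt_or_ge (k : ℕ) M with hk | hk
  · exact Or.inl (Dmat_row M K k j hk.ne)
  · exact Or.inr (by rw [h1, h0 k hk])

/-- columns `≥ M` of `g u D` -/
theorem right_cols (M K : ℕ) (g : Matrix (Fin M) (Fin M) F)
    (u : Matrix (Fin (M + 1 + K)) (Fin (M + 1 + K)) F) (hu : InUminus M u)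
    (i j : Fin (M + 1 + K)) (hj : M ≤ (j : ℕ)) :
    (embTop M (M + 1 + K) g * u * Dmat M K) i j = u i j := by
  rw [mul_right_one _ _ _ _ fun k => Or.inl (Dmat_col M K k j hj)]
  refine mul_left_one _ _ _ _ fun k => ?_
  rcases lt_or_ge (k : ℕ) M with hk | hk
  · exact Or.inr (hu.2 k j (fun h => by subst h; omega) (Or.inl hk.le))
  · exact Or.inl (embTop_col M _ g i k hk)

theorem W_cols (M K : ℕ) (g : Matrix (Fin M) (Fin M) F)
    (u W : Matrix (Fin (M + 1 + K)) (Fin (M + 1 + K)) F) (hu : InUminus M u)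
    (h : Dmat M K * W = embTop M (M + 1 + K) g * u * Dmat M K)
    (i j : Fin (M + 1 + K)) (hj : M ≤ (j : ℕ)) : W i j = u i j := by
  have h1 : ∀ i : Fin (M + 1 + K), (i : ℕ) ≠ M → W i j = u i j := by
    intro i hi
    rw [← right_cols M K g u hu i j hj, ← h]
    exact (mul_left_one _ _ _ _ fun k => Or.inl (Dmat_row M K i k hi)).symm
  by_cases hi : (i : ℕ) = M
  · rw [← right_cols M K g u hu i j hj, ← h]
    refine (mul_left_one _ _ _ _ fun k => ?_).symm
    rcases lt_or_ge (k : ℕ) M with hk | hk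
    · right
      rw [h1 k hk.ne]
      exact hu.2 k j (fun h => by subst h; omega) (Or.inl hk.le)
    · exact Or.inl (Dmat_col M K i k hk)
  · exact h1 i hi

theorem lower_integral {m : ℕ} (mu : Fin m → ℤ) (hmu : Monotone mu)
    (l c r C : Matrix (Fin m) (Fin m) F) (hl : LowUnip l) (hr : UpUnip r)
    (hc : ∀ i j, c i j ∈ OR) (hC : ∀ i j, C i j ∈ OR)
    (he : l * tdiag mu * r = c * tdiag mu * C) : ∀ i j, l i j ∈ OR := by
  have ht : (tdiag mu).transpose = tdiag mu := Matrix.diagonal_transpose _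
  have h1 : (l * tdiag mu * r).transpose = r.transpose * tdiag mu * l.transpose := by
    rw [Matrix.transpose_mul, Matrix.transpose_mul, ht, Matrix.mul_assoc]
  have h2 : (c * tdiag mu * C).transpose = C.transpose * tdiag mu * c.transpose := by
    rw [Matrix.transpose_mul, Matrix.transpose_mul, ht, Matrix.mul_assoc]
  have E8 : r.transpose * tdiag mu * l.transpose = C.transpose * tdiag mu * c.transpose := by
    rw [← h1, ← h2, he]
  have hup := hl.tr
  have := upper_integral le_rfl mu hmu r.transpose C.transpose l.transpose c.transpose
      hr.tr (fun i => hup.1 i) hup.2 (fun i j => hC j i) (fun i j => hc j i) E8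
  exact fun i j => this j i


set_option maxHeartbeats 1000000 in
/-- If the weights coincide, the intersection of the `H(F)`-orbit
`O^{(λ,(θ,θ'))}` and the `U(F)`-orbit `S^{(λ,(θ,θ'))}` in `Gr_M × Gr_N` consists of
exactly one point, namely `(t^{-λ}, D·t^{(θ,θ')})`: any pair `(X·GL_M(O), Y·GL_N(O))`
lying in both orbits equals that point. -/
theorem stmt5 (M K : ℕ)
    (lam : Fin M → ℤ) (th : Fin (M + 1) → ℤ) (thp : Fin K → ℤ)
    (hlam : Monotone lam) (hth : Monotone th)
    (X : Matrix (Fin M) (Fin M) F)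
    (Y : Matrix (Fin (M + 1 + K)) (Fin (M + 1 + K)) F)
    (hO : ∃ (g : Matrix (Fin M) (Fin M) F)
        (u : Matrix (Fin (M + 1 + K)) (Fin (M + 1 + K)) F)
        (c1 : Matrix (Fin M) (Fin M) F)
        (c2 : Matrix (Fin (M + 1 + K)) (Fin (M + 1 + K)) F),
        IsUnit g.det ∧ InUminus M u ∧ InGLO c1 ∧ InGLO c2 ∧
          X = g * tdiag (fun i => -(lam i)) * c1 ∧
          Y = embTop M (M + 1 + K) g * u * (Dmat M K * tdiag (fullSeq M K th thp)) * c2)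
    (hS : ∃ (v1 : Matrix (Fin M) (Fin M) F)
        (v2 : Matrix (Fin (M + 1 + K)) (Fin (M + 1 + K)) F)
        (c1 : Matrix (Fin M) (Fin M) F)
        (c2 : Matrix (Fin (M + 1 + K)) (Fin (M + 1 + K)) F),
        LowUnip v1 ∧ UpUnip v2 ∧ InGLO c1 ∧ InGLO c2 ∧
          X = v1 * tdiag (fun i => -(lam i)) * c1 ∧
          Y = Dmat M K * v2 * tdiag (fullSeq M K th thp) * c2) :
    ∃ (c : Matrix (Fin M) (Fin M) F)
      (c' : Matrix (Fin (M + 1 + K)) (Fin (M + 1 + K)) F),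
      InGLO c ∧ InGLO c' ∧
        X = tdiag (fun i => -(lam i)) * c ∧
        Y = Dmat M K * tdiag (fullSeq M K th thp) * c' := by
  obtain ⟨g, u, a, p, -, hu, ⟨a', ha, ha', haa, -⟩, ⟨p', hp, hp', hpp, -⟩, hX1, hY1⟩ := hO
  obtain ⟨v, V, b, q, hv, hV, hbG, hqG, hX2, hY2⟩ := hS
  obtain ⟨b', hb, hb', -, -⟩ := id hbG
  obtain ⟨q', hq, hq', hqq, hqq2⟩ := id hqG
  obtain ⟨w, hw, hvw, hwv⟩ := hv.inv
  obtain ⟨Vi, hVi, hVVi, hViV⟩ := hV.inv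
  have hMN : M ≤ M + 1 + K := by omega
  let f : Fin (M + 1 + K) → ℤ := fullSeq M K th thp
  let f1 : Fin M → ℤ := fun i => -(lam i)
  let fM : Fin M → ℤ := fun i => f (Fin.castLE hMN i)
  let mu : Fin M → ℤ := fun i => - f1 i + fM i
  have hmu : Monotone mu := by
    intro i j hij
    have hij' : (i : ℕ) ≤ j := hij
    have e : ∀ i : Fin M, fM i = th ⟨i, by omega⟩ := by
      intro i
      simp only [fM, f, fullSeq]
      rw [dif_pos (show ((Fin.castLE hMN i : Fin (M + 1 + K)) : ℕ) < M + 1 from by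
        simp only [Fin.val_castLE]; omega)]
      rfl
    simp only [mu, f1, e, neg_neg]
    exact add_le_add (hlam hij) (hth hij')
  let G := embTop M (M + 1 + K) g
  -- the two basic equations
  have E1 : w * g * tdiag f1 = tdiag f1 * (b * a') := by
    have h : g * tdiag f1 * a = v * tdiag f1 * b := hX1.symm.trans hX2
    calc w * g * tdiag f1 = w * (g * tdiag f1 * a) * a' := by
          simp only [Matrix.mul_assoc, haa, Matrix.mul_one]
      _ = (w * v) * (tdiag f1 * (b * a')) := by rw [h]; simp only [Matrix.mul_assoc]
      _ = _ := by rw [hwv, Matrix.one_mul]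
  have E2 : G * u * Dmat M K * (tdiag f * p) = Dmat M K * (V * tdiag f * q) := by
    have h := hY1.symm.trans hY2
    calc _ = G * u * (Dmat M K * tdiag f) * p := by simp only [Matrix.mul_assoc]
      _ = Dmat M K * V * tdiag f * q := h
      _ = _ := by simp only [Matrix.mul_assoc]
  have E3 : G * u * Dmat M K * (tdiag f * (p * q')) = Dmat M K * (V * tdiag f) := by
    calc _ = G * u * Dmat M K * (tdiag f * p) * q' := by simp only [Matrix.mul_assoc]
      _ = Dmat M K * (V * tdiag f) * (q * q') := by rw [E2]; simp only [Matrix.mul_assoc]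
      _ = _ := by rw [hqq, Matrix.mul_one]
  have E4 : Dmat M K * (V * tdiag f * (q * p') * tdiag (fun i => - f i))
      = G * u * Dmat M K := by
    calc _ = (Dmat M K * (V * tdiag f * q)) * p' * tdiag (fun i => - f i) := by
          simp only [Matrix.mul_assoc]
      _ = G * u * Dmat M K * (tdiag f * ((p * p') * tdiag (fun i => - f i))) := by
          rw [← E2]; simp only [Matrix.mul_assoc]
      _ = _ := by rw [hpp, Matrix.one_mul, tdiag_mul_neg, Matrix.mul_one]
  let r := tdiag (fun i => - f i) * V * tdiag f
  let R := tdiag (fun i => - f i) * Vi * tdiag f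
  let l := tdiag (fun i => - f1 i) * w * tdiag f1
  let L := tdiag (fun i => - f1 i) * v * tdiag f1
  have hr : UpUnip r := hV.conj f
  have hR : UpUnip R := hVi.conj f
  have hl : LowUnip l := hw.conj f1
  have hRr : R * r = 1 := by
    exact (tconj_mul f Vi V).trans (by rw [hViV, conj_id])
  have hLl : L * l = 1 := by
    exact (tconj_mul f1 v w).trans (by rw [hvw, conj_id])
  -- rows `≥ M` of `r`
  have hrow2 : ∀ i : Fin (M + 1 + K), M ≤ (i : ℕ) → ∀ j, r i j ∈ OR := by
    have hWc := W_cols M K g u _ hu E4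
    refine inv_rows M R r hR hRr ?_
    intro m hm
    refine (ul_integral M R (tdiag (fun i => - f i) *
      (V * tdiag f * (q * p') * tdiag (fun i => - f i)) * tdiag f) (q * p') hR ?_ ?_
      (mul_mem_OR hq hp') ?_ m hm).1
    · intro j hj
      exact conj_one _ _ _ (by rw [hWc j j hj, hu.1])
    · intro i j hj hij
      refine conj_zero _ _ _ _ ?_
      rw [hWc i j hj]
      exact hu.2 i j (fun h => by subst h; omega) (Or.inr hij.le)
    · refine (tconj_mul f Vi _).trans ?_
      calc _ = tdiag (fun i => - f i) * (Vi * V) * tdiag f * (q * p') *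
            (tdiag (fun i => - f i) * tdiag f) := by simp only [Matrix.mul_assoc]
        _ = _ := by rw [hViV, conj_id, tdiag_neg_mul, Matrix.one_mul, Matrix.mul_one]
  -- the top rows
  let rt : Matrix (Fin M) (Fin (M + 1 + K)) F := r.submatrix (Fin.castLE hMN) id
  let Ct : Matrix (Fin M) (Fin (M + 1 + K)) F := (p * q').submatrix (Fin.castLE hMN) id
  have hCt : ∀ i j, Ct i j ∈ OR := fun i j => mul_mem_OR hp hq' _ _
  have E5 : g * tdiag fM * Ct = tdiag fM * rt := by
    refine Matrix.ext fun i j => ?_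
    have h1 : (tdiag fM * rt) i j = (V * tdiag f) (Fin.castLE hMN i) j := by
      have : (tdiag fM * rt) i j = (tdiag f * r) (Fin.castLE hMN i) j := by
        simp only [tdiag, Matrix.diagonal_mul]
        rfl
      rw [this]
      have h2 : tdiag f * r = V * tdiag f := by
        calc tdiag f * r = (tdiag f * tdiag (fun i => - f i)) * (V * tdiag f) := by
              simp only [r, Matrix.mul_assoc]
          _ = _ := by rw [tdiag_mul_neg, Matrix.one_mul]
      rw [h2]
    have hiM : ((Fin.castLE hMN i : Fin (M + 1 + K)) : ℕ) < M := i.2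
    rw [h1, ← mul_left_one (Dmat M K) (V * tdiag f) (Fin.castLE hMN i) j
      (fun k => Or.inl (Dmat_row M K _ k hiM.ne)), ← E3, Matrix.mul_apply, Matrix.mul_apply]
    refine Fintype.sum_of_injective (Fin.castLE hMN) (Fin.castLE_injective hMN) _ _ ?_ ?_
    · intro k hk
      have hk' : M ≤ (k : ℕ) := by
        by_contra hcon
        exact hk ⟨⟨k.1, by omega⟩, rfl⟩
      rw [top_rows M K g u hu _ k hiM, embTop_col _ _ _ _ _ hk', Matrix.one_apply_ne, zero_mul]
      intro h
      rw [← h] at hk'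
      omega
    · intro k
      rw [top_rows M K g u hu _ _ hiM]
      have : embTop M (M + 1 + K) g (Fin.castLE hMN i) (Fin.castLE hMN k) = g i k := by
        unfold embTop
        rw [dif_pos hiM, dif_pos (show ((Fin.castLE hMN k : Fin (M + 1 + K)) : ℕ) < M from k.2)]
        rfl
      rw [this]
      simp only [tdiag, Matrix.mul_diagonal, Matrix.diagonal_mul, mul_assoc]
      rfl
  have hmuD : tdiag mu = tdiag (fun i => - f1 i) * tdiag fM := (tdiag_mul _ _).symm
  have E6 : l * tdiag mu * rt = (b * a') * tdiag mu * Ct := by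
    calc l * tdiag mu * rt
        = tdiag (fun i => - f1 i) * w * (tdiag f1 * tdiag (fun i => - f1 i)) *
          (tdiag fM * rt) := by simp only [hmuD, l, Matrix.mul_assoc]
      _ = tdiag (fun i => - f1 i) * (w * g) * (tdiag fM * Ct) := by
          rw [tdiag_mul_neg, Matrix.mul_one, ← E5]; simp only [Matrix.mul_assoc]
      _ = tdiag (fun i => - f1 i) * (w * g) * (tdiag f1 * tdiag (fun i => - f1 i)) *
          (tdiag fM * Ct) := by rw [tdiag_mul_neg, Matrix.mul_one]
      _ = tdiag (fun i => - f1 i) * (w * g * tdiag f1) * (tdiag mu * Ct) := by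
          simp only [hmuD, Matrix.mul_assoc]
      _ = (tdiag (fun i => - f1 i) * tdiag f1) * (b * a') * tdiag mu * Ct := by
          rw [E1]; simp only [Matrix.mul_assoc]
      _ = _ := by rw [tdiag_neg_mul, Matrix.one_mul]
  have hba := mul_mem_OR hb ha'
  have hrow1 : ∀ i j, rt i j ∈ OR := by
    refine upper_integral hMN mu hmu l (b * a') rt Ct hl ?_ ?_ hba hCt E6
    · intro i; exact hr.1 _
    · intro i j hij; exact hr.2 _ _ hij
  have hrI : ∀ i j, r i j ∈ OR := by
    intro i j
    rcases lt_or_ge (i : ℕ) M with hi | hi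
    · exact hrow1 ⟨i, hi⟩ j
    · exact hrow2 i hi j
  have hlI : ∀ i j, l i j ∈ OR := by
    let rs : Matrix (Fin M) (Fin M) F := rt.submatrix id (Fin.castLE hMN)
    let Cs : Matrix (Fin M) (Fin M) F := Ct.submatrix id (Fin.castLE hMN)
    have E7 : l * tdiag mu * rs = (b * a') * tdiag mu * Cs := by
      refine Matrix.ext fun i j => ?_
      exact congrFun (congrFun E6 i) (Fin.castLE hMN j)
    have hrs : UpUnip rs := ⟨fun i => hr.1 _, fun i j hij => hr.2 _ _ hij⟩
    exact lower_integral mu hmu l (b * a') rs Cs hl hrs hba (fun i j => hCt _ _) E7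
  have hLG : InGLO L := by
    obtain ⟨B, h1, h2, h3, h4⟩ := inGLO_of_det l hlI hl.det
    have : L = B := by
      calc L = L * (l * B) := by rw [h3, Matrix.mul_one]
        _ = B := by rw [← Matrix.mul_assoc, hLl, Matrix.one_mul]
    rw [this]
    exact ⟨l, h2, h1, h4, h3⟩
  have hrG : InGLO r := inGLO_of_det r hrI hr.det
  refine ⟨L * b, r * q, hLG.mul hbG, hrG.mul hqG, ?_, ?_⟩
  · rw [hX2]
    show v * tdiag f1 * b = tdiag f1 * (L * b)
    calc v * tdiag f1 * b = (tdiag f1 * tdiag (fun i => - f1 i)) * (v * tdiag f1 * b) := by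
          rw [tdiag_mul_neg, Matrix.one_mul]
      _ = _ := by simp only [L, Matrix.mul_assoc]
  · rw [hY2]
    show Dmat M K * V * tdiag f * q = Dmat M K * tdiag f * (r * q)
    calc Dmat M K * V * tdiag f * q
        = Dmat M K * (tdiag f * tdiag (fun i => - f i)) * (V * tdiag f * q) := by
          rw [tdiag_mul_neg, Matrix.mul_one]; simp only [Matrix.mul_assoc]
      _ = _ := by simp only [r, Matrix.mul_assoc]
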